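/- arXiv:1406.2839 — 9 statements merged into one kernel-verified Lean document; each statement's English description precedes it below -/
import Mathlib

section
/- For every fixed parameter θ, the function ν ↦ M(θ,ν) = ∑_{i=1}^n (f_θ(y_i)+ν) − n∫_Ω exp(f_θ(y)+ν) dμ(y) attains its unique global maximum over ν ∈ ℝ at ν*(θ) = −log Z(θ) = −log ∫_Ω exp(f_θ(y)) dμ(y), and at this maximiser M(θ, ν*(θ)) = L(θ) − n. Consequently M(θ,ν) ≤ L(θ) − n for all ν ∈ ℝ, with equality if and only if ν = ν*(θ). -/
/-!
Since `∫ exp (f θ + ν) = exp ν * Z`, substituting `t = ν + log Z` turns the objective into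
`M ν = L - n + n * (t + 1 - exp t)`. Everything then follows from `t + 1 ≤ exp t`, which is an
equality exactly at `t = 0`, i.e. at `ν = -log Z`.
-/

open MeasureTheory Real Finset

/-- For fixed `θ`, the Poisson-transformed objective
`M ν = ∑ (f θ (y i) + ν) − n ∫ exp (f θ y + ν) dμ` attains its unique global maximum
over `ν ∈ ℝ` at `ν⋆ θ = −log Z θ`, where it equals `L θ − n`. -/
theorem poisson_transform_fixed_theta
    {Ω : Type*} [MeasurableSpace Ω] (μ : Measure Ω) {Θ : Type*}
    (f : Θ → Ω → ℝ) (n : ℕ) (hn : 1 ≤ n) (y : Fin n → Ω) (θ : Θ)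
    (hmeas : Measurable (fun z => Real.exp (f θ z)))
    (hint : Integrable (fun z => Real.exp (f θ z)) μ)
    (hZpos : 0 < ∫ z, Real.exp (f θ z) ∂μ)
    (L : ℝ) (hL : L = (∑ i, f θ (y i)) - n * Real.log (∫ z, Real.exp (f θ z) ∂μ))
    (M : ℝ → ℝ)
    (hM : ∀ ν : ℝ, M ν = (∑ i, (f θ (y i) + ν)) - n * ∫ z, Real.exp (f θ z + ν) ∂μ) :
    M (-Real.log (∫ z, Real.exp (f θ z) ∂μ)) = L - n ∧
    (∀ ν : ℝ, M ν ≤ L - n) ∧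
    (∀ ν : ℝ, M ν = L - n ↔ ν = -Real.log (∫ z, Real.exp (f θ z) ∂μ)) := by
  set Z := ∫ z, Real.exp (f θ z) ∂μ with hZ
  have hn0 : (0 : ℝ) < n := by exact_mod_cast hn
  -- In the variable `t = ν + log Z` the gap to `L - n` is `n` times the gap in `t + 1 ≤ exp t`.
  have key : ∀ ν : ℝ,
      M ν = L - n + n * ((ν + Real.log Z) + 1 - Real.exp (ν + Real.log Z)) := by
    intro ν
    have hI : ∫ z, Real.exp (f θ z + ν) ∂μ = Z * Real.exp ν := by
      simp_rw [Real.exp_add]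
      rw [integral_mul_const]
    rw [hM, hI, hL, Real.exp_add, Real.exp_log hZpos, Finset.sum_add_distrib]
    simp only [Finset.sum_const, Finset.card_univ, Fintype.card_fin, nsmul_eq_mul]
    ring
  refine ⟨?_, fun ν => ?_, fun ν => ⟨fun h => ?_, fun h => ?_⟩⟩
  · rw [key]
    simp
  · rw [key]
    nlinarith [Real.add_one_le_exp (ν + Real.log Z)]
  · by_contra hne
    -- Strictness of `t + 1 < exp t` for `t ≠ 0` gives uniqueness of the maximiser.
    have hlt := Real.add_one_lt_exp (x := ν + Real.log Z)
      (fun h0 => hne (eq_neg_of_add_eq_zero_left h0))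
    rw [key] at h
    nlinarith [mul_pos hn0 (sub_pos.mpr hlt)]
  · rw [key, h]
    simp
end

section
/- (Theorem 1, Poisson transform, IID case.) The set of points θ* with θ* ∈ argmax_{θ∈Θ} L(θ) coincides with the set of points θ̃ such that (θ̃, ν̃) ∈ argmax_{θ∈Θ, ν∈ℝ} M(θ,ν) for some ν̃ ∈ ℝ. In particular, if argmax_{θ∈Θ} L(θ) is a singleton {θ*}, then argmax_{θ∈Θ, ν∈ℝ} M(θ,ν) is the singleton {(θ*, −log Z(θ*))}. -/
/-!
With `t = ν + log Z θ`, one has `M θ ν = L θ - n - n * (exp t - t - 1)`. Since `exp t ≥ t + 1`, with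
equality only at `t = 0`, the maximum of `M θ ·` is `L θ - n`, attained exactly at `ν = -log Z θ`.
Hence maximising `M` jointly amounts to maximising `L` and setting `ν = -log Z θ`.
-/

open MeasureTheory Real Finset

/-- **Theorem 1, Poisson transform, IID case.**
The argmax set of the log-likelihood `L` coincides with the set of `θ` that appear as
first coordinate of a global maximiser of the Poisson-transformed objective `M`.
If the argmax of `L` is a singleton `{θ⋆}`, then the argmax of `M` is the singleton
`{(θ⋆, −log Z θ⋆)}`. -/
theorem poisson_transform_iid
    {Ω : Type*} [MeasurableSpace Ω] (μ : Measure Ω) {Θ : Type*}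
    (f : Θ → Ω → ℝ) (n : ℕ) (hn : 1 ≤ n) (y : Fin n → Ω)
    (hmeas : ∀ θ : Θ, Measurable (fun z => Real.exp (f θ z)))
    (hint : ∀ θ : Θ, Integrable (fun z => Real.exp (f θ z)) μ)
    (hZpos : ∀ θ : Θ, 0 < ∫ z, Real.exp (f θ z) ∂μ)
    (L : Θ → ℝ)
    (hL : ∀ θ : Θ, L θ = (∑ i, f θ (y i)) - n * Real.log (∫ z, Real.exp (f θ z) ∂μ))
    (M : Θ → ℝ → ℝ)
    (hM : ∀ (θ : Θ) (ν : ℝ),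
      M θ ν = (∑ i, (f θ (y i) + ν)) - n * ∫ z, Real.exp (f θ z + ν) ∂μ) :
    {θ0 : Θ | ∀ θ : Θ, L θ ≤ L θ0} =
      {θ0 : Θ | ∃ ν0 : ℝ, ∀ (θ : Θ) (ν : ℝ), M θ ν ≤ M θ0 ν0} ∧
    ∀ θs : Θ, {θ0 : Θ | ∀ θ : Θ, L θ ≤ L θ0} = {θs} →
      {p : Θ × ℝ | ∀ q : Θ × ℝ, M q.1 q.2 ≤ M p.1 p.2} =
        {(θs, -Real.log (∫ z, Real.exp (f θs z) ∂μ))} := by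
  -- Substituting `t = ν + log Z θ` splits `M` into `L` and a function of `t` alone.
  have key : ∀ θ ν, M θ ν = L θ - n
      - n * (Real.exp (ν + Real.log (∫ z, Real.exp (f θ z) ∂μ))
        - (ν + Real.log (∫ z, Real.exp (f θ z) ∂μ)) - 1) := by
    intro θ ν
    rw [hM, hL, Real.exp_add, Real.exp_log (hZpos θ)]
    simp only [Real.exp_add, integral_mul_const, Finset.sum_add_distrib, Finset.sum_const,
      Finset.card_univ, Fintype.card_fin, nsmul_eq_mul]
    ring
  have hn0 : (0 : ℝ) < n := by exact_mod_cast hn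
  have upper : ∀ θ ν, M θ ν ≤ L θ - n := by
    intro θ ν
    rw [key]
    have := mul_nonneg hn0.le (sub_nonneg.2 (le_sub_iff_add_le.2
      (Real.add_one_le_exp (ν + Real.log (∫ z, Real.exp (f θ z) ∂μ)))))
    nlinarith
  have attained : ∀ θ, M θ (-Real.log (∫ z, Real.exp (f θ z) ∂μ)) = L θ - n := by
    intro θ
    rw [key]
    simp
  have unique : ∀ θ ν, L θ - n ≤ M θ ν → ν = -Real.log (∫ z, Real.exp (f θ z) ∂μ) := by
    intro θ ν h
    by_contra hne
    have ht : ν + Real.log (∫ z, Real.exp (f θ z) ∂μ) ≠ 0 :=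
      fun h0 => hne (eq_neg_of_add_eq_zero_left h0)
    rw [key] at h
    have := mul_pos hn0 (sub_pos.2 (lt_sub_iff_add_lt.2 (Real.add_one_lt_exp ht)))
    nlinarith
  have maxL : ∀ θ0 ν0, (∀ θ ν, M θ ν ≤ M θ0 ν0) → ∀ θ, L θ ≤ L θ0 := by
    intro θ0 ν0 h θ
    have h1 := h θ (-Real.log (∫ z, Real.exp (f θ z) ∂μ))
    rw [attained] at h1
    linarith [upper θ0 ν0]
  have maxM : ∀ θ0, (∀ θ, L θ ≤ L θ0) →
      ∀ θ ν, M θ ν ≤ M θ0 (-Real.log (∫ z, Real.exp (f θ0 z) ∂μ)) := by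
    intro θ0 h θ ν
    rw [attained]
    linarith [upper θ ν, h θ]
  refine ⟨?_, ?_⟩
  · ext θ0
    exact ⟨fun h => ⟨_, maxM θ0 h⟩, fun ⟨ν0, h⟩ => maxL θ0 ν0 h⟩
  · intro θs hs
    ext ⟨θ0, ν0⟩
    simp only [Set.mem_setOf_eq, Set.mem_singleton_iff, Prod.mk.injEq]
    constructor
    · intro h
      have hθ : θ0 ∈ ({θs} : Set Θ) := hs ▸ maxL θ0 ν0 fun θ ν => h (θ, ν)
      obtain rfl : θ0 = θs := hθ
      refine ⟨rfl, unique θ0 ν0 ?_⟩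
      rw [← attained]
      exact h (θ0, _)
    · rintro ⟨rfl, rfl⟩ q
      have hmem : θ0 ∈ {θ0 : Θ | ∀ θ : Θ, L θ ≤ L θ0} := hs ▸ rfl
      exact maxM θ0 hmem q.1 q.2
end

section
/- For every fixed θ, the function ν = (ν_1,…,ν_n) ↦ M(θ,ν) attains its unique global maximum over ℝ^n at the point ν*(θ) with coordinates ν*_t(θ) = −log Z_t(θ) = −log ∫_Ω exp(f_θ(y|y_{t−1})) dμ(y) for t = 1,…,n, and at this maximiser M(θ, ν*(θ)) = L(θ) − n; consequently M(θ,ν) ≤ L(θ) − n for all ν ∈ ℝ^n. -/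
open MeasureTheory Real Finset

/-!
Integrating term by term, `∫ ∑ₜ exp (f + νₜ) = ∑ₜ exp (νₜ) Zₜ = ∑ₜ exp (νₜ - ν⋆ₜ)`, since
`Zₜ = exp (-ν⋆ₜ)`. Hence the gap `(L - n) - M ν` equals `∑ₜ (exp dₜ - dₜ - 1)` with
`d = ν - ν⋆`. Each summand is nonnegative and vanishes only at `dₜ = 0`, because the exponential
lies strictly above its tangent at `0` away from the point of tangency; all three claims follow.
-/

/-- **Poisson transform, non-IID case, fixed `θ`.**
For a Markov-chain model with data `y 0, y 1, …, y n`, the map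
`ν ↦ M θ ν` on `ℝⁿ` attains its unique global maximum at
`ν⋆ t = −log Z_t θ = −log ∫ exp (f θ z (y t)) dμ(z)`, where it equals `L θ − n`;
consequently `M θ ν ≤ L θ − n` for all `ν`. -/
theorem poisson_transform_markov_fixed_theta
    {Ω : Type*} [MeasurableSpace Ω] (μ : Measure Ω) {Θ : Type*}
    (f : Θ → Ω → Ω → ℝ) (n : ℕ) (hn : 1 ≤ n) (y : ℕ → Ω) (θ : Θ)
    (hmeas : ∀ t : Fin n, Measurable (fun z => Real.exp (f θ z (y t.1))))
    (hint : ∀ t : Fin n, Integrable (fun z => Real.exp (f θ z (y t.1))) μ)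
    (hZpos : ∀ t : Fin n, 0 < ∫ z, Real.exp (f θ z (y t.1)) ∂μ)
    (L : ℝ)
    (hL : L = ∑ t : Fin n,
      (f θ (y (t.1 + 1)) (y t.1) - Real.log (∫ z, Real.exp (f θ z (y t.1)) ∂μ)))
    (M : (Fin n → ℝ) → ℝ)
    (hM : ∀ ν : Fin n → ℝ,
      M ν = (∑ t : Fin n, (f θ (y (t.1 + 1)) (y t.1) + ν t))
        - ∫ z, (∑ t : Fin n, Real.exp (f θ z (y t.1) + ν t)) ∂μ)
    (νstar : Fin n → ℝ)
    (hν : ∀ t : Fin n, νstar t = -Real.log (∫ z, Real.exp (f θ z (y t.1)) ∂μ)) :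
    M νstar = L - n ∧
    (∀ ν : Fin n → ℝ, M ν ≤ L - n) ∧
    (∀ ν : Fin n → ℝ, M ν = L - n ↔ ν = νstar) := by
  have gap : ∀ ν : Fin n → ℝ,
      L - n - M ν = ∑ t : Fin n, (exp (ν t - νstar t) - (ν t - νstar t) - 1) := by
    intro ν
    have hI : ∫ z, (∑ t : Fin n, exp (f θ z (y t.1) + ν t)) ∂μ
        = ∑ t : Fin n, exp (ν t - νstar t) := by
      simp only [exp_add]
      rw [integral_finsetSum _ fun t _ => (hint t).mul_const _]
      refine Finset.sum_congr rfl fun t _ => ?_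
      rw [integral_mul_const, hν t, sub_neg_eq_add, exp_add, exp_log (hZpos t), mul_comm]
    rw [hM ν, hI, hL]
    simp only [hν, Finset.sum_sub_distrib, Finset.sum_add_distrib, Finset.sum_neg_distrib,
      Finset.sum_const, Finset.card_univ, Fintype.card_fin, nsmul_eq_mul, mul_one]
    ring
  have nonneg : ∀ ν : Fin n → ℝ, ∀ t ∈ (Finset.univ : Finset (Fin n)),
      0 ≤ exp (ν t - νstar t) - (ν t - νstar t) - 1 := fun ν t _ => by
    linarith [add_one_le_exp (ν t - νstar t)]
  have eq_iff : ∀ ν : Fin n → ℝ, M ν = L - n ↔ ν = νstar := by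
    intro ν
    rw [eq_comm, ← sub_eq_zero, gap ν, Finset.sum_eq_zero_iff_of_nonneg (nonneg ν)]
    constructor
    · intro h
      funext t
      by_contra hne
      linarith [h t (Finset.mem_univ t), add_one_lt_exp (sub_ne_zero.mpr hne)]
    · rintro rfl t -
      simp
  exact ⟨(eq_iff νstar).mpr rfl,
    fun ν => sub_nonneg.mp (gap ν ▸ Finset.sum_nonneg (nonneg ν)), eq_iff⟩
end

section
/- (Theorem 2, Poisson transform, non-IID case.) The set of points θ* with θ* ∈ argmax_{θ∈Θ} L(θ) coincides with the set of points θ̃ such that (θ̃, ν̃) ∈ argmax_{θ∈Θ, ν∈ℝ^n} M(θ,ν) for some ν̃ ∈ ℝ^n; moreover for any such maximiser the coordinates of ν̃ are ν̃_t = −log Z_t(θ̃). -/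
/-!
Write `Z_t = ∫ exp (f θ · (y t)) dμ` and `u_t = ν_t + log Z_t`. Since the integral of
`exp (f + ν_t)` is `Z_t * exp ν_t = exp u_t`, completing terms gives
`M θ ν = L θ - n - ∑ t, (exp u_t - u_t - 1)`.
Each summand is nonnegative and vanishes only at `u_t = 0`. Hence `M θ ν ≤ L θ - n`, with equality
exactly at `ν_t = -log Z_t`: profiling out `ν` turns `M` into `L - n`, which yields both claims.
-/

open MeasureTheory Real Finset

/-- **Theorem 2, Poisson transform, non-IID case.**
The argmax set of the Markov-chain log-likelihood `L` coincides with the set of `θ`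
appearing as first coordinate of a global maximiser of the Poisson-transformed
objective `M` over `Θ × ℝⁿ`; moreover any such maximiser `(θ̃, ν̃)` has
`ν̃ t = −log Z_t θ̃`. -/
theorem poisson_transform_markov
    {Ω : Type*} [MeasurableSpace Ω] (μ : Measure Ω) {Θ : Type*}
    (f : Θ → Ω → Ω → ℝ) (n : ℕ) (hn : 1 ≤ n) (y : ℕ → Ω)
    (hmeas : ∀ (θ : Θ) (t : Fin n), Measurable (fun z => Real.exp (f θ z (y t.1))))
    (hint : ∀ (θ : Θ) (t : Fin n), Integrable (fun z => Real.exp (f θ z (y t.1))) μ)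
    (hZpos : ∀ (θ : Θ) (t : Fin n), 0 < ∫ z, Real.exp (f θ z (y t.1)) ∂μ)
    (L : Θ → ℝ)
    (hL : ∀ θ : Θ, L θ = ∑ t : Fin n,
      (f θ (y (t.1 + 1)) (y t.1) - Real.log (∫ z, Real.exp (f θ z (y t.1)) ∂μ)))
    (M : Θ → (Fin n → ℝ) → ℝ)
    (hM : ∀ (θ : Θ) (ν : Fin n → ℝ),
      M θ ν = (∑ t : Fin n, (f θ (y (t.1 + 1)) (y t.1) + ν t))
        - ∫ z, (∑ t : Fin n, Real.exp (f θ z (y t.1) + ν t)) ∂μ) :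
    {θ0 : Θ | ∀ θ : Θ, L θ ≤ L θ0} =
      {θ0 : Θ | ∃ ν0 : Fin n → ℝ, ∀ (θ : Θ) (ν : Fin n → ℝ), M θ ν ≤ M θ0 ν0} ∧
    ∀ (θt : Θ) (νt : Fin n → ℝ),
      (∀ (θ : Θ) (ν : Fin n → ℝ), M θ ν ≤ M θt νt) →
      ∀ t : Fin n, νt t = -Real.log (∫ z, Real.exp (f θt z (y t.1)) ∂μ) := by
  set Z : Θ → Fin n → ℝ := fun θ t => ∫ z, Real.exp (f θ z (y t.1)) ∂μ with hZ
  have key : ∀ θ ν, M θ ν = L θ - n -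
      ∑ t : Fin n, (Real.exp (ν t + Real.log (Z θ t)) - (ν t + Real.log (Z θ t)) - 1) := by
    intro θ ν
    have hI : ∫ z, (∑ t : Fin n, Real.exp (f θ z (y t.1) + ν t)) ∂μ
        = ∑ t : Fin n, Real.exp (ν t + Real.log (Z θ t)) := by
      simp only [Real.exp_add]
      rw [integral_finsetSum _ (fun t _ => (hint θ t).mul_const _)]
      refine Finset.sum_congr rfl fun t _ => ?_
      rw [integral_mul_const, Real.exp_log (hZpos θ t), mul_comm]
    rw [hM, hL, hI]
    simp only [Finset.sum_sub_distrib, Finset.sum_add_distrib, Finset.sum_const,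
      Finset.card_univ, Fintype.card_fin, nsmul_eq_mul, mul_one, hZ]
    ring
  have hnn : ∀ u : ℝ, 0 ≤ Real.exp u - u - 1 := fun u => by
    linarith [Real.add_one_le_exp u]
  have hle : ∀ θ ν, M θ ν ≤ L θ - n := fun θ ν => by
    rw [key]
    linarith [Finset.sum_nonneg fun t (_ : t ∈ Finset.univ) => hnn (ν t + Real.log (Z θ t))]
  have heq : ∀ θ, M θ (fun t => -Real.log (Z θ t)) = L θ - n := fun θ => by
    rw [key]
    simp
  refine ⟨Set.ext fun θ0 => ⟨fun h => ?_, ?_⟩, fun θt νt h t => ?_⟩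
  · refine ⟨fun t => -Real.log (Z θ0 t), fun θ ν => ?_⟩
    rw [heq]
    linarith [hle θ ν, h θ]
  · rintro ⟨ν0, h⟩ θ
    linarith [h θ (fun t => -Real.log (Z θ t)), heq θ, hle θ0 ν0]
  -- Maximality against the profiled `ν` forces the sum of nonnegative gaps to vanish.
  · have h1 := h θt (fun t => -Real.log (Z θt t))
    rw [heq, key] at h1
    have h2 := Finset.single_le_sum
      (f := fun t => Real.exp (νt t + Real.log (Z θt t)) - (νt t + Real.log (Z θt t)) - 1)
      (fun t _ => hnn _) (Finset.mem_univ t)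
    have h3 : νt t + Real.log (Z θt t) = 0 := by
      by_contra hne
      have := Real.add_one_lt_exp hne
      linarith
    exact eq_neg_of_add_eq_zero_left h3
end

section
/- (Corollary 3, semi-parametric Poisson transform.) Let F be a set of functions χ : Ω → ℝ which, for every θ ∈ Θ, contains the function χ_θ defined by χ_θ(u) = −log ∫_Ω exp(f_θ(y|u)) dμ(y). For χ ∈ F define M_χ(θ,χ) = ∑_{t=1}^n (f_θ(y_t|y_{t−1}) + χ(y_{t−1})) − ∫_Ω ∑_{t=1}^n exp(f_θ(y|y_{t−1}) + χ(y_{t−1})) dμ(y). Then the set of points θ* with θ* ∈ argmax_{θ∈Θ} L(θ) coincides with the set of points θ̃ such that (θ̃, χ̃) ∈ argmax_{θ∈Θ, χ∈F} M_χ(θ,χ) for some χ̃ ∈ F. -/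
/-!
For fixed `θ` the integral in `Mχ` splits as `∑ t, Z t * exp (χ (y t))` with
`Z t = ∫ exp (f θ z (y t)) dμ(z)`. The scalar map `c ↦ c - Z * exp c` has maximum `-log Z - 1`,
attained at `c = -log Z` (`sub_mul_exp_le`). Hence `Mχ θ χ ≤ L θ - n` for every `χ`, with equality
at `χ u = -log ∫ exp (f θ z u) dμ(z)`, which belongs to `F`: profiling out `χ` turns `Mχ` into `L`
up to an additive constant, so the maximising `θ` are the same.
-/

open MeasureTheory Real Finset

/-- The inequality `x + 1 ≤ exp x` at `x = c + log Z`. -/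
lemma sub_mul_exp_le {Z : ℝ} (hZ : 0 < Z) (c : ℝ) :
    c - Z * Real.exp c ≤ -Real.log Z - 1 := by
  have h := Real.add_one_le_exp (c + Real.log Z)
  rw [Real.exp_add, Real.exp_log hZ] at h
  linarith

/-- **Corollary 3, semi-parametric Poisson transform.**
Let `F` be a set of functions `χ : Ω → ℝ` containing, for every `θ`, the function
`u ↦ −log ∫ exp (f θ z u) dμ(z)`.  Then the argmax set of the Markov-chain
log-likelihood `L` coincides with the set of `θ` appearing as first coordinate of a
maximiser of the semi-parametric objective `Mχ` over `Θ × F`. -/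
theorem poisson_transform_semiparametric
    {Ω : Type*} [MeasurableSpace Ω] (μ : Measure Ω) {Θ : Type*}
    (f : Θ → Ω → Ω → ℝ) (n : ℕ) (hn : 1 ≤ n) (y : ℕ → Ω)
    (hmeas : ∀ (θ : Θ) (u : Ω), Measurable (fun z => Real.exp (f θ z u)))
    (hint : ∀ (θ : Θ) (u : Ω), Integrable (fun z => Real.exp (f θ z u)) μ)
    (hZpos : ∀ (θ : Θ) (u : Ω), 0 < ∫ z, Real.exp (f θ z u) ∂μ)
    (F : Set (Ω → ℝ))
    (hF : ∀ θ : Θ, (fun u : Ω => -Real.log (∫ z, Real.exp (f θ z u) ∂μ)) ∈ F)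
    (L : Θ → ℝ)
    (hL : ∀ θ : Θ, L θ = ∑ t : Fin n,
      (f θ (y (t.1 + 1)) (y t.1) - Real.log (∫ z, Real.exp (f θ z (y t.1)) ∂μ)))
    (Mχ : Θ → (Ω → ℝ) → ℝ)
    (hMχ : ∀ (θ : Θ) (χ : Ω → ℝ),
      Mχ θ χ = (∑ t : Fin n, (f θ (y (t.1 + 1)) (y t.1) + χ (y t.1)))
        - ∫ z, (∑ t : Fin n, Real.exp (f θ z (y t.1) + χ (y t.1))) ∂μ) :
    {θ0 : Θ | ∀ θ : Θ, L θ ≤ L θ0} =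
      {θ0 : Θ | ∃ χ0 ∈ F, ∀ (θ : Θ), ∀ χ ∈ F, Mχ θ χ ≤ Mχ θ0 χ0} := by
  have hM : ∀ θ χ, Mχ θ χ = ∑ t : Fin n, (f θ (y (t.1 + 1)) (y t.1) +
      (χ (y t.1) - (∫ z, Real.exp (f θ z (y t.1)) ∂μ) * Real.exp (χ (y t.1)))) := by
    intro θ χ
    simp only [hMχ, Real.exp_add]
    rw [integral_finsetSum _ fun t _ => (hint θ (y t.1)).mul_const _, ← Finset.sum_sub_distrib]
    refine Finset.sum_congr rfl fun t _ => ?_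
    rw [integral_mul_const]
    ring
  have hLn : ∀ θ, L θ - n = ∑ t : Fin n, (f θ (y (t.1 + 1)) (y t.1) +
      (-Real.log (∫ z, Real.exp (f θ z (y t.1)) ∂μ) - 1)) := by
    intro θ
    simp only [hL, Finset.sum_add_distrib, Finset.sum_sub_distrib, Finset.sum_neg_distrib,
      Finset.sum_const, Finset.card_univ, Fintype.card_fin, nsmul_eq_mul, mul_one]
    ring
  have hle : ∀ θ χ, Mχ θ χ ≤ L θ - n := by
    intro θ χ
    rw [hM, hLn]
    refine Finset.sum_le_sum fun t _ => ?_
    linarith [sub_mul_exp_le (hZpos θ (y t.1)) (χ (y t.1))]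
  have heq : ∀ θ, Mχ θ (fun u => -Real.log (∫ z, Real.exp (f θ z u) ∂μ)) = L θ - n := by
    intro θ
    rw [hM, hLn]
    refine Finset.sum_congr rfl fun t _ => ?_
    rw [Real.exp_neg, Real.exp_log (hZpos θ (y t.1)), mul_inv_cancel₀ (hZpos θ (y t.1)).ne']
  ext θ0
  constructor
  · intro h
    refine ⟨_, hF θ0, fun θ χ _ => ?_⟩
    rw [heq]
    linarith [hle θ χ, h θ]
  · rintro ⟨χ0, _, h⟩ θ
    have h1 := h θ _ (hF θ)
    rw [heq] at h1
    linarith [hle θ0 χ0]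
end

section
/- (Abstract form of Corollary 6 on the penalised problem.) Let H be a real normed space, Θ a set, and F : Θ × H → ℝ a function. Suppose (θ₀, χ₀) ∈ Θ × H is simultaneously a global maximiser of F over Θ × H and a global maximiser of the penalised objective (θ,χ) ↦ F(θ,χ) − λ₀‖χ‖² for some λ₀ > 0. Then for every λ with 0 < λ < λ₀ and every global maximiser (θ_λ, χ_λ) of (θ,χ) ↦ F(θ,χ) − λ‖χ‖², one has ‖χ_λ‖ = ‖χ₀‖ and F(θ_λ, χ_λ) = F(θ₀, χ₀) = sup_{Θ×H} F; in particular the optimal value of F achieved by the penalised solutions does not improve as λ decreases below λ₀. -/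
/-- **abstract form of Corollary 6 on the penalised problem.**
If `(θ₀, χ₀)` is simultaneously a global maximiser of `F` over `Θ × H` and of the
`λ₀`-penalised objective, then for every `0 < λ < λ₀` any global maximiser
`(θ_λ, χ_λ)` of the `λ`-penalised objective satisfies `‖χ_λ‖ = ‖χ₀‖` and
`F (θ_λ, χ_λ) = F (θ₀, χ₀)`: the optimal value of `F` does not improve as the
penalty is relaxed below `λ₀`. -/
theorem penalised_no_improvement_below_lambda0
    {H : Type*} [NormedAddCommGroup H] [NormedSpace ℝ H]
    {Θ : Type*} [Nonempty Θ] (F : Θ × H → ℝ)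
    (θ₀ : Θ) (χ₀ : H) (lam₀ : ℝ) (hlam₀ : 0 < lam₀)
    (hmaxF : ∀ p : Θ × H, F p ≤ F (θ₀, χ₀))
    (hmaxPen : ∀ p : Θ × H, F p - lam₀ * ‖p.2‖ ^ 2 ≤ F (θ₀, χ₀) - lam₀ * ‖χ₀‖ ^ 2) :
    ∀ lam : ℝ, 0 < lam → lam < lam₀ →
      ∀ p : Θ × H, (∀ q : Θ × H, F q - lam * ‖q.2‖ ^ 2 ≤ F p - lam * ‖p.2‖ ^ 2) →
        ‖p.2‖ = ‖χ₀‖ ∧ F p = F (θ₀, χ₀) := by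
  intro lam hlam hlt p hp
  have hF := hmaxF p
  have hpen := hmaxPen p
  have hopt := hp (θ₀, χ₀)
  simp only at hopt
  -- With `d = F (θ₀, χ₀) - F p ≥ 0` and `t = ‖χ₀‖² - ‖p.2‖²`, the two optimality conditions
  -- read `lam₀ * t ≤ d ≤ lam * t`; since `0 < lam < lam₀` this forces `t = 0` and `d = 0`.
  have h_nonneg : 0 ≤ ‖χ₀‖ ^ 2 - ‖p.2‖ ^ 2 := by
    refine nonneg_of_mul_nonneg_right (a := lam) ?_ hlam
    linarith
  have h_nonpos : ‖χ₀‖ ^ 2 - ‖p.2‖ ^ 2 ≤ 0 := by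
    by_contra! h
    have := mul_pos (sub_pos.mpr hlt) h
    linarith
  have hsq : ‖p.2‖ ^ 2 = ‖χ₀‖ ^ 2 := by linarith
  refine ⟨(pow_left_inj₀ (norm_nonneg _) (norm_nonneg _) two_ne_zero).mp hsq, ?_⟩
  rw [hsq] at hopt
  linarith
end

section
/- (Lemma: localisation of the optimal ν.) Assume |f_θ(y) − log q(y)| ≤ C for all y ∈ Ω and all θ ∈ Θ. Then there exists a bounded interval I ⊂ ℝ such that for every θ ∈ Θ, every m ≥ 1 and every realisation of the reference points r_1,…,r_m, both functions ν ↦ M(θ,ν) and ν ↦ R^m(θ,ν) attain their supremum over ℝ at a point of I; in particular the maximiser ν*(θ) = −log ∫_Ω exp(f_θ(y)) dμ(y) of M(θ,·) satisfies ν*(θ) ∈ [−C, C]. -/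
/-!
The interval is `I = [-C, C]` for both functions, nonempty because `n ≥ 1` forces `0 ≤ C`.

For `M`, put `Z = ∫ exp (f θ) dμ`. The pointwise bound `exp (-C) * q ≤ exp (f θ) ≤ exp C * q`
gives `exp (-C) ≤ Z ≤ exp C`, and `M θ ν = const + n * (ν - exp ν * Z)` is maximal at
`ν = -log Z` because `x + 1 ≤ exp x`.

For `R`, the derivative in `ν` is `∑ᵢ (1 - σᵢ) - ∑ⱼ σⱼ`, where
`σ = n exp (f + ν) / (n exp (f + ν) + m q)`. If `ν ≥ C` then `exp (f + ν) ≥ q`, so every `σ` is at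
least `n / (n + m)` and the derivative is at most `n * m / (n + m) - m * n / (n + m) = 0`. For
`ν ≤ -C` the inequalities reverse. This cancellation is what makes the interval independent
of `m`. Derivatives are avoided: each summand lies below its tangent line at `s = ±C`
(`log_noise_tangent`, `log_data_tangent`), and the slopes are compared with those of the balanced
case `exp (f + s) = q` (`log_noise_le`, `log_data_le`). So `R` outside `[-C, C]` is dominated
by its value at the nearer endpoint, and a continuous function attains its maximum on `[-C, C]`.
-/

open MeasureTheory Real Finset

/-- Tangent-line bound at `d = 0` for the concave function `d ↦ log (B / (A exp d + B))`. -/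
lemma log_noise_tangent {A B : ℝ} (hA : 0 < A) (hB : 0 < B) (d : ℝ) :
    Real.log (B / (A * Real.exp d + B)) ≤ Real.log (B / (A + B)) - A / (A + B) * d := by
  have hAB : 0 < A + B := by positivity
  have hAe : 0 < A * Real.exp d + B := by positivity
  -- Convexity of `exp` between `0` and `d`, with weight `A / (A + B)` on `d`.
  have hconv := convexOn_exp.2 (Set.mem_univ d) (Set.mem_univ (0 : ℝ))
    (by positivity : 0 ≤ A / (A + B)) (by positivity : 0 ≤ B / (A + B)) (by field_simp)
  simp only [smul_eq_mul, mul_zero, add_zero, Real.exp_zero, mul_one] at hconv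
  have heq : A / (A + B) * Real.exp d + B / (A + B) = (A * Real.exp d + B) / (A + B) := by
    field_simp
  rw [heq] at hconv
  have hlog := (Real.le_log_iff_exp_le (by positivity)).2 hconv
  rw [Real.log_div hAe.ne' hAB.ne'] at hlog
  rw [Real.log_div hB.ne' hAe.ne', Real.log_div hB.ne' hAB.ne']
  linarith

/-- Tangent-line bound at `d = 0` for the concave function `d ↦ log (A exp d / (A exp d + B))`. -/
lemma log_data_tangent {A B : ℝ} (hA : 0 < A) (hB : 0 < B) (d : ℝ) :
    Real.log (A * Real.exp d / (A * Real.exp d + B)) ≤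
      Real.log (A / (A + B)) + B / (A + B) * d := by
  have hAB : 0 < A + B := by positivity
  have hAe : 0 < A * Real.exp d + B := by positivity
  have h := log_noise_tangent hA hB d
  have hw : B / (A + B) = 1 - A / (A + B) := by field_simp; ring
  rw [Real.log_div hB.ne' hAe.ne', Real.log_div hB.ne' hAB.ne'] at h
  rw [Real.log_div (by positivity) hAe.ne', Real.log_div hA.ne' hAB.ne',
    Real.log_mul hA.ne' (Real.exp_pos d).ne', Real.log_exp, hw]
  linarith

/-- A noise summand of `R` moved from `s` to `ν` changes by at most the slope of the balanced
case, provided `exp (a + s) - p` has the sign of `ν - s`. -/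
lemma log_noise_le {n m p : ℝ} (hn : 0 < n) (hm : 0 < m) (hp : 0 < p) (a s ν : ℝ)
    (h : 0 ≤ (Real.exp (a + s) - p) * (ν - s)) :
    Real.log (m * p / (n * Real.exp (a + ν) + m * p)) ≤
      Real.log (m * p / (n * Real.exp (a + s) + m * p)) - n / (n + m) * (ν - s) := by
  have hE := Real.exp_pos (a + s)
  have ht := log_noise_tangent (mul_pos hn hE) (mul_pos hm hp) (ν - s)
  rw [mul_assoc, ← Real.exp_add, show a + s + (ν - s) = a + ν by ring] at ht
  refine ht.trans ?_
  have hd : n * Real.exp (a + s) / (n * Real.exp (a + s) + m * p) * (ν - s)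
      - n / (n + m) * (ν - s) = n * m * ((Real.exp (a + s) - p) * (ν - s)) /
        ((n * Real.exp (a + s) + m * p) * (n + m)) := by
    field_simp
    ring
  have hnn : 0 ≤ n * m * ((Real.exp (a + s) - p) * (ν - s)) /
        ((n * Real.exp (a + s) + m * p) * (n + m)) := by positivity
  linarith

/-- The analogue of `log_noise_le` for a data summand of `R`. -/
lemma log_data_le {n m p : ℝ} (hn : 0 < n) (hm : 0 < m) (hp : 0 < p) (a s ν : ℝ)
    (h : 0 ≤ (Real.exp (a + s) - p) * (ν - s)) :
    Real.log (n * Real.exp (a + ν) / (n * Real.exp (a + ν) + m * p)) ≤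
      Real.log (n * Real.exp (a + s) / (n * Real.exp (a + s) + m * p))
        + m / (n + m) * (ν - s) := by
  have hE := Real.exp_pos (a + s)
  have ht := log_data_tangent (mul_pos hn hE) (mul_pos hm hp) (ν - s)
  rw [mul_assoc, ← Real.exp_add, show a + s + (ν - s) = a + ν by ring] at ht
  refine ht.trans ?_
  have hd : m / (n + m) * (ν - s) - m * p / (n * Real.exp (a + s) + m * p) * (ν - s)
      = n * m * ((Real.exp (a + s) - p) * (ν - s)) /
        ((n * Real.exp (a + s) + m * p) * (n + m)) := by
    field_simp
    ring
  have hnn : 0 ≤ n * m * ((Real.exp (a + s) - p) * (ν - s)) /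
        ((n * Real.exp (a + s) + m * p) * (n + m)) := by positivity
  linarith

/-- **Lemma 6: localisation of the optimal `ν`.**
If `|f θ y − log q y| ≤ C` for all `y` and `θ`, there is a bounded interval `I ⊆ ℝ`
such that, for every `θ`, every `m ≥ 1` and every realisation of the reference
points, both `ν ↦ M θ ν` and `ν ↦ R^m θ ν` attain their supremum over `ℝ` at a
point of `I`; in particular `ν⋆ θ = −log ∫ exp (f θ) dμ ∈ [−C, C]`. -/
theorem ncd_localisation_of_nu
    {Ω : Type*} [MeasurableSpace Ω] (μ : Measure Ω) {Θ : Type*}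
    (f : Θ → Ω → ℝ) (q : Ω → ℝ)
    (hfm : ∀ θ : Θ, Measurable (f θ)) (hqm : Measurable q)
    (hqpos : ∀ z : Ω, 0 < q z)
    (hqdens : ∫ z, q z ∂μ = 1) (hqint : Integrable q μ)
    (C : ℝ) (hbound : ∀ (z : Ω) (θ : Θ), |f θ z - Real.log (q z)| ≤ C)
    (n : ℕ) (hn : 1 ≤ n) (y : Fin n → Ω)
    (M : Θ → ℝ → ℝ)
    (hM : ∀ (θ : Θ) (ν : ℝ),
      M θ ν = (∑ i, (f θ (y i) + ν)) - n * ∫ z, Real.exp (f θ z + ν) ∂μ)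
    (R : ℕ → (ℕ → Ω) → Θ → ℝ → ℝ)
    (hR : ∀ (m : ℕ) (r : ℕ → Ω) (θ : Θ) (ν : ℝ), R m r θ ν =
      (∑ i : Fin n, Real.log ((n : ℝ) * Real.exp (f θ (y i) + ν) /
        ((n : ℝ) * Real.exp (f θ (y i) + ν) + (m : ℝ) * q (y i)))) +
      ∑ j ∈ Finset.range m, Real.log ((m : ℝ) * q (r j) /
        ((n : ℝ) * Real.exp (f θ (r j) + ν) + (m : ℝ) * q (r j)))) :
    ∃ I : Set ℝ, Bornology.IsBounded I ∧
      ∀ θ : Θ,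
        (-Real.log (∫ z, Real.exp (f θ z) ∂μ) ∈ Set.Icc (-C) C) ∧
        (∃ ν0 ∈ I, ∀ ν : ℝ, M θ ν ≤ M θ ν0) ∧
        (∀ m : ℕ, 1 ≤ m → ∀ r : ℕ → Ω,
          ∃ ν1 ∈ I, ∀ ν : ℝ, R m r θ ν ≤ R m r θ ν1) := by
  have hn0 : (0 : ℝ) < n := by exact_mod_cast hn
  have hC : ∀ θ : Θ, 0 ≤ C := fun θ => (abs_nonneg _).trans (hbound (y ⟨0, hn⟩) θ)
  have hup : ∀ θ z, q z ≤ Real.exp (f θ z + C) := fun θ z => by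
    rw [← Real.log_le_iff_le_exp (hqpos z)]
    linarith [(abs_le.1 (hbound z θ)).1]
  have hlo : ∀ θ z, Real.exp (f θ z + -C) ≤ q z := fun θ z => by
    rw [← Real.le_log_iff_exp_le (hqpos z)]
    linarith [(abs_le.1 (hbound z θ)).2]
  refine ⟨Set.Icc (-C) C, Metric.isBounded_Icc _ _, fun θ => ?_⟩
  have hle : ∀ z, Real.exp (f θ z) ≤ Real.exp C * q z := fun z => by
    have h := mul_le_mul_of_nonneg_left (hlo θ z) (Real.exp_pos C).le
    rwa [← Real.exp_add, show C + (f θ z + -C) = f θ z by ring] at h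
  have hge : ∀ z, Real.exp (-C) * q z ≤ Real.exp (f θ z) := fun z => by
    have h := mul_le_mul_of_nonneg_left (hup θ z) (Real.exp_pos (-C)).le
    rwa [← Real.exp_add, show -C + (f θ z + C) = f θ z by ring] at h
  have hint : Integrable (fun z => Real.exp (f θ z)) μ :=
    (hqint.const_mul (Real.exp C)).mono' (hfm θ).exp.aestronglyMeasurable
      (Filter.Eventually.of_forall fun z => by
        rw [Real.norm_eq_abs, abs_of_pos (Real.exp_pos _)]
        exact hle z)
  have hZle : ∫ z, Real.exp (f θ z) ∂μ ≤ Real.exp C := by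
    have h := integral_mono hint (hqint.const_mul (Real.exp C)) hle
    rwa [integral_const_mul, hqdens, mul_one] at h
  have hZge : Real.exp (-C) ≤ ∫ z, Real.exp (f θ z) ∂μ := by
    have h := integral_mono (hqint.const_mul (Real.exp (-C))) hint hge
    rwa [integral_const_mul, hqdens, mul_one] at h
  have hZpos : 0 < ∫ z, Real.exp (f θ z) ∂μ := (Real.exp_pos _).trans_le hZge
  have hmem : -Real.log (∫ z, Real.exp (f θ z) ∂μ) ∈ Set.Icc (-C) C := by
    have h1 := (Real.log_le_iff_le_exp hZpos).2 hZle
    have h2 := (Real.le_log_iff_exp_le hZpos).2 hZge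
    constructor <;> linarith
  refine ⟨hmem, ⟨_, hmem, fun ν => ?_⟩, fun m hm r => ?_⟩
  · have hMform : ∀ ν, M θ ν = (∑ i, f θ (y i)) +
        n * (ν - Real.exp (ν + Real.log (∫ z, Real.exp (f θ z) ∂μ))) := fun ν => by
      rw [hM, Real.exp_add, Real.exp_log hZpos]
      simp only [Real.exp_add, integral_mul_const, Finset.sum_add_distrib, Finset.sum_const,
        Finset.card_univ, Fintype.card_fin, nsmul_eq_mul]
      ring
    rw [hMform, hMform, neg_add_cancel, Real.exp_zero]
    have h := Real.add_one_le_exp (ν + Real.log (∫ z, Real.exp (f θ z) ∂μ))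
    gcongr (∑ i, f θ (y i)) + n * ?_
    linarith
  · have hm0 : (0 : ℝ) < m := by exact_mod_cast hm
    have hstep : ∀ s ν : ℝ, (∀ z, 0 ≤ (Real.exp (f θ z + s) - q z) * (ν - s)) →
        R m r θ ν ≤ R m r θ s := fun s ν h => by
      have h1 := Finset.sum_le_sum fun (i : Fin n) (_ : i ∈ Finset.univ) =>
        log_data_le hn0 hm0 (hqpos (y i)) (f θ (y i)) s ν (h (y i))
      have h2 := Finset.sum_le_sum fun (j : ℕ) (_ : j ∈ Finset.range m) =>
        log_noise_le hn0 hm0 (hqpos (r j)) (f θ (r j)) s ν (h (r j))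
      rw [Finset.sum_add_distrib, Finset.sum_const, Finset.card_univ, Fintype.card_fin,
        nsmul_eq_mul] at h1
      rw [Finset.sum_sub_distrib, Finset.sum_const, Finset.card_range, nsmul_eq_mul] at h2
      -- The slopes of the `n` data summands and of the `m` noise summands cancel.
      have hbal : (n : ℝ) * (m / (n + m) * (ν - s)) = m * (n / (n + m) * (ν - s)) := by ring
      rw [hR, hR]
      linarith
    have hcont : Continuous (R m r θ) := by
      have hden : ∀ z ν, (n : ℝ) * Real.exp (f θ z + ν) + m * q z ≠ 0 := fun z ν => by
        have := hqpos z
        positivity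
      rw [show R m r θ = _ from funext (hR m r θ)]
      refine Continuous.add (continuous_finsetSum _ fun i _ => ?_)
        (continuous_finsetSum _ fun j _ => ?_)
      · refine Continuous.log (Continuous.div (by fun_prop) (by fun_prop) (hden _)) fun ν => ?_
        exact div_ne_zero (by positivity) (hden _ _)
      · refine Continuous.log (Continuous.div (by fun_prop) (by fun_prop) (hden _)) fun ν => ?_
        exact div_ne_zero (mul_pos hm0 (hqpos _)).ne' (hden _ _)
    have hCC : -C ≤ C := by linarith [hC θ]
    obtain ⟨ν1, hν1, hmax⟩ := isCompact_Icc.exists_isMaxOn (Set.nonempty_Icc.2 hCC)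
      hcont.continuousOn
    refine ⟨ν1, hν1, fun ν => ?_⟩
    rcases le_total ν (-C) with h | h
    · refine (hstep (-C) ν fun z => ?_).trans (hmax (Set.left_mem_Icc.2 hCC))
      exact mul_nonneg_of_nonpos_of_nonpos (sub_nonpos.2 (hlo θ z)) (sub_nonpos.2 h)
    rcases le_total ν C with h' | h'
    · exact hmax ⟨h, h'⟩
    · refine (hstep C ν fun z => ?_).trans (hmax (Set.right_mem_Icc.2 hCC))
      exact mul_nonneg (sub_nonneg.2 (hup θ z)) (sub_nonneg.2 h')
end

section
/- (The Poisson transform preserves confidence intervals: Schur-complement identity for the Hessians.) Let c : ℝ^p → ℝ and Z : ℝ^p → ℝ be twice differentiable with Z(θ) > 0 for all θ, let n > 0, and define L(θ) = c(θ) − n log Z(θ) and M(θ,ν) = c(θ) + nν − n e^ν Z(θ). Then for every θ ∈ ℝ^p, evaluating all second derivatives of M at the point (θ, ν*(θ)) with ν*(θ) = −log Z(θ), the block ∂²M/∂ν² equals −n, and the Schur complement of the ν-block in the Hessian of M equals the Hessian of L: ∂²M/∂θ² − (∂²M/∂θ∂ν)(∂²M/∂ν²)^{-1}(∂²M/∂ν∂θ)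 = ∂²L/∂θ². Equivalently, Hess L(θ) = Hess_{θθ} M + (1/n)·(∂_{θ}∂_ν M)(∂_{θ}∂_ν M)ᵀ at (θ, ν*(θ)). -/
open Real

/-!
Both Hessians are computed explicitly. With `e^ν = 1 / Z θ` at `ν = -log (Z θ)`, the Hessian of
`M` in directions `(u, s)`, `(v, t)` is `c''(u, v) - n (Z''(u, v) / Z + s Z'v / Z + t Z'u / Z + s t)`
(from `hessian_poisson`, stated for arbitrary `ν`), whereas `L''(u, v) = c''(u, v) - n Z''(u, v) / Z + n Z'u Z'v / Z²`
(`hessian_logLik`). The extra rank-one term in `L''` is `1 / n` times the product of the mixed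
derivatives `-n Z'u / Z` and `-n Z'v / Z` of `M`.
-/

/-- A second derivative is computed by differentiating the directional derivative `f' x b` in the
direction `a`, which avoids derivatives of operator-valued maps. -/
lemma iteratedFDeriv_two_eq_of_hasFDerivAt {E : Type*} [NormedAddCommGroup E] [NormedSpace ℝ E]
    {f : E → ℝ} (hf : ContDiff ℝ 2 f) {f' : E → E →L[ℝ] ℝ} (hf' : ∀ x, HasFDerivAt f (f' x) x)
    {z a b : E} {g : E →L[ℝ] ℝ} (hg : HasFDerivAt (fun x => f' x b) g z) :
    iteratedFDeriv ℝ 2 f z ![a, b] = g a := by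
  have hd : Differentiable ℝ (fderiv ℝ f) :=
    (hf.fderiv_right (m := 1) (by norm_num)).differentiable (by norm_num)
  have h1 : HasFDerivAt (fun x => fderiv ℝ f x b) _ z :=
    (hd z).hasFDerivAt.clm_apply (hasFDerivAt_const b z)
  have h2 : (fun x => fderiv ℝ f x b) = fun x => f' x b := by
    funext x
    rw [(hf' x).fderiv]
  rw [h2] at h1
  rw [iteratedFDeriv_two_apply, hg.unique h1]
  simp

lemma hasFDerivAt_fderiv_apply {E : Type*} [NormedAddCommGroup E] [NormedSpace ℝ E]
    {f : E → ℝ} (hf : ContDiff ℝ 2 f) (z b : E) :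
    HasFDerivAt (fun x => fderiv ℝ f x b) ((fderiv ℝ (fderiv ℝ f) z).flip b) z := by
  have hd : Differentiable ℝ (fderiv ℝ f) :=
    (hf.fderiv_right (m := 1) (by norm_num)).differentiable (by norm_num)
  refine ((hd z).hasFDerivAt.clm_apply (hasFDerivAt_const b z)).congr_fderiv ?_
  ext a
  simp

lemma hessian_logLik {E : Type*} [NormedAddCommGroup E] [NormedSpace ℝ E]
    {c Z : E → ℝ} (hc : ContDiff ℝ 2 c) (hZ : ContDiff ℝ 2 Z) (hZpos : ∀ θ, 0 < Z θ)
    (n : ℝ) (θ u v : E) :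
    iteratedFDeriv ℝ 2 (fun θ => c θ - n * Real.log (Z θ)) θ ![u, v] =
      fderiv ℝ (fderiv ℝ c) θ u v - n * (fderiv ℝ (fderiv ℝ Z) θ u v / Z θ
        - fderiv ℝ Z θ u * fderiv ℝ Z θ v / Z θ ^ 2) := by
  have hne : ∀ x, Z x ≠ 0 := fun x => (hZpos x).ne'
  have dc : ∀ x, HasFDerivAt c (fderiv ℝ c x) x :=
    fun x => (hc.differentiable (by norm_num) x).hasFDerivAt
  have dZ : ∀ x, HasFDerivAt Z (fderiv ℝ Z x) x :=
    fun x => (hZ.differentiable (by norm_num) x).hasFDerivAt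
  have hg : HasFDerivAt (fun x => fderiv ℝ c x v - n * ((Z x)⁻¹ * fderiv ℝ Z x v)) _ θ :=
    (hasFDerivAt_fderiv_apply hc θ v).sub
      ((((hasDerivAt_inv (hne θ)).comp_hasFDerivAt θ (dZ θ)).mul
        (hasFDerivAt_fderiv_apply hZ θ v)).const_mul n)
  rw [iteratedFDeriv_two_eq_of_hasFDerivAt
    (hc.sub (contDiff_const.mul (hZ.log hne)))
    (fun x => (dc x).sub (((dZ x).log (hne x)).const_mul n)) (g := _) hg]
  have := hne θ
  simp
  field_simp
  ring

lemma hessian_poisson {E : Type*} [NormedAddCommGroup E] [NormedSpace ℝ E]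
    {c Z : E → ℝ} (hc : ContDiff ℝ 2 c) (hZ : ContDiff ℝ 2 Z)
    (n : ℝ) (θ u v : E) (ν s t : ℝ) :
    iteratedFDeriv ℝ 2 (fun x : E × ℝ => c x.1 + n * x.2 - n * Real.exp x.2 * Z x.1) (θ, ν)
        ![(u, s), (v, t)] =
      fderiv ℝ (fderiv ℝ c) θ u v - n * Real.exp ν * (fderiv ℝ (fderiv ℝ Z) θ u v
        + s * fderiv ℝ Z θ v + t * fderiv ℝ Z θ u + s * t * Z θ) := by
  have d1 : ∀ x : E × ℝ, HasFDerivAt (fun x : E × ℝ => x.1) (ContinuousLinearMap.fst ℝ E ℝ) x :=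
    fun x => hasFDerivAt_fst
  have d2 : ∀ x : E × ℝ, HasFDerivAt (fun x : E × ℝ => x.2) (ContinuousLinearMap.snd ℝ E ℝ) x :=
    fun x => hasFDerivAt_snd
  have dc : ∀ x : E × ℝ, HasFDerivAt (fun x : E × ℝ => c x.1) _ x :=
    fun x => ((hc.differentiable (by norm_num) x.1).hasFDerivAt).comp x (d1 x)
  have dZ : ∀ x : E × ℝ, HasFDerivAt (fun x : E × ℝ => Z x.1) _ x :=
    fun x => ((hZ.differentiable (by norm_num) x.1).hasFDerivAt).comp x (d1 x)
  have de : ∀ x : E × ℝ, HasFDerivAt (fun x : E × ℝ => n * Real.exp x.2) _ x :=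
    fun x => ((d2 x).exp).const_mul n
  have dc2 : HasFDerivAt (fun x : E × ℝ => fderiv ℝ c x.1 v) _ (θ, ν) :=
    HasFDerivAt.comp (g := fun y => fderiv ℝ c y v) (θ, ν)
      (hasFDerivAt_fderiv_apply hc θ v) (d1 (θ, ν))
  have dZ2 : HasFDerivAt (fun x : E × ℝ => fderiv ℝ Z x.1 v) _ (θ, ν) :=
    HasFDerivAt.comp (g := fun y => fderiv ℝ Z y v) (θ, ν)
      (hasFDerivAt_fderiv_apply hZ θ v) (d1 (θ, ν))
  have hg : HasFDerivAt (fun x : E × ℝ => fderiv ℝ c x.1 v + n * t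
      - (n * Real.exp x.2 * fderiv ℝ Z x.1 v + Z x.1 * (n * (Real.exp x.2 * t)))) _ (θ, ν) :=
    (dc2.add_const (n * t)).sub (((de (θ, ν)).mul dZ2).add
      ((dZ (θ, ν)).mul (((d2 (θ, ν)).exp.mul_const t).const_mul n)))
  have hcd : ContDiff ℝ 2 (fun x : E × ℝ => c x.1 + n * x.2 - n * Real.exp x.2 * Z x.1) :=
    ((hc.comp contDiff_fst).add (contDiff_const.mul contDiff_snd)).sub
      ((contDiff_const.mul contDiff_snd.exp).mul (hZ.comp contDiff_fst))
  rw [iteratedFDeriv_two_eq_of_hasFDerivAt hcd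
    (fun x => ((dc x).add ((d2 x).const_mul n)).sub ((de x).mul (dZ x))) (g := _) hg]
  simp
  ring

/-- **the Poisson transform preserves confidence intervals:
Schur-complement identity for the Hessians.**
With `L θ = c θ − n log (Z θ)` and `M (θ,ν) = c θ + n ν − n e^ν Z θ`, at the point
`(θ, ν⋆ θ)` with `ν⋆ θ = −log (Z θ)` the `ν`-block of the Hessian of `M` equals `−n`,
and the Schur complement of the `ν`-block in the Hessian of `M` equals the Hessian of
`L`: `Hess L = Hess_θθ M + (1/n) (∂_θ∂_ν M)(∂_θ∂_ν M)ᵀ`. -/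
theorem poisson_transform_preserves_confidence_intervals
    {p : ℕ} (c Z : (Fin p → ℝ) → ℝ)
    (hc : ContDiff ℝ 2 c) (hZ : ContDiff ℝ 2 Z) (hZpos : ∀ θ, 0 < Z θ)
    (n : ℝ) (hn : 0 < n)
    (L : (Fin p → ℝ) → ℝ) (hL : ∀ θ, L θ = c θ - n * Real.log (Z θ))
    (M : (Fin p → ℝ) × ℝ → ℝ)
    (hM : ∀ x : (Fin p → ℝ) × ℝ, M x = c x.1 + n * x.2 - n * Real.exp x.2 * Z x.1)
    (θ : Fin p → ℝ) :
    iteratedFDeriv ℝ 2 M (θ, -Real.log (Z θ))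
        ![((0 : Fin p → ℝ), (1 : ℝ)), ((0 : Fin p → ℝ), (1 : ℝ))] = -n ∧
    ∀ u v : Fin p → ℝ,
      iteratedFDeriv ℝ 2 L θ ![u, v] =
        iteratedFDeriv ℝ 2 M (θ, -Real.log (Z θ)) ![(u, (0 : ℝ)), (v, (0 : ℝ))]
          + (1 / n) *
            (iteratedFDeriv ℝ 2 M (θ, -Real.log (Z θ))
              ![(u, (0 : ℝ)), ((0 : Fin p → ℝ), (1 : ℝ))]) *
            (iteratedFDeriv ℝ 2 M (θ, -Real.log (Z θ))
              ![(v, (0 : ℝ)), ((0 : Fin p → ℝ), (1 : ℝ))]) := by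
  obtain rfl : L = fun θ => c θ - n * Real.log (Z θ) := funext hL
  obtain rfl : M = fun x => c x.1 + n * x.2 - n * Real.exp x.2 * Z x.1 := funext hM
  have hZ0 : Z θ ≠ 0 := (hZpos θ).ne'
  have he : Real.exp (-Real.log (Z θ)) = (Z θ)⁻¹ := by
    rw [Real.exp_neg, Real.exp_log (hZpos θ)]
  refine ⟨?_, fun u v => ?_⟩
  · rw [hessian_poisson hc hZ, he]
    simp
    field_simp
  · rw [hessian_logLik hc hZ hZpos]
    simp only [hessian_poisson hc hZ, he]
    simp
    field_simp
    ring
end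

section
/- (Concavity of the noise-contrastive log-likelihood for exponential families.) Let s : Ω → ℝ^p be measurable and set f_θ(y) = ⟨θ, s(y)⟩. Then for any fixed data y_1,…,y_n ∈ Ω, reference points r_1,…,r_m ∈ Ω, and positive density q, the noise-contrastive log-likelihood R^m(θ,ν) = ∑_{i=1}^n log[ n·exp(⟨θ,s(y_i)⟩+ν) / (n·exp(⟨θ,s(y_i)⟩+ν) + m·q(y_i)) ] + ∑_{j=1}^m log[ m·q(r_j) / (n·exp(⟨θ,s(r_j)⟩+ν) + m·q(r_j)) ] is a concave function of (θ,ν) on ℝ^p × ℝ. -/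
/-!
With `L t = log (A * exp t + B)`, where `A = n` and `B = m * q z`, each summand of the
log-likelihood is either `log A + t - L t` or `log B - L t`, evaluated at the point
`t = ⟨θ, s z⟩ + ν`, which is linear in `(θ, ν)`. Concavity thus reduces to convexity of `L`
(`log_mul_exp_add_le`), which follows from convexity of `exp` alone.
-/

open MeasureTheory Real Finset

/-- Convexity of `t ↦ log (A * exp t + B)`. Writing `P`, `Q` for its values at `t`, `u`, convexity
of `exp` bounds `exp (a * (t - P) + b * (u - Q))` and `exp (a * (-P) + b * (-Q))`; the combination
of these bounds with weights `A` and `B` has right-hand side `a + b = 1`. -/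
lemma log_mul_exp_add_le {A B a b : ℝ} (hA : 0 < A) (hB : 0 < B) (ha : 0 ≤ a) (hb : 0 ≤ b)
    (hab : a + b = 1) (t u : ℝ) :
    Real.log (A * Real.exp (a * t + b * u) + B) ≤
      a * Real.log (A * Real.exp t + B) + b * Real.log (A * Real.exp u + B) := by
  have hpos (v : ℝ) : 0 < A * Real.exp v + B := by positivity
  have hone (v : ℝ) : A * Real.exp (v - Real.log (A * Real.exp v + B))
      + B * Real.exp (-Real.log (A * Real.exp v + B)) = 1 := by
    have := (hpos v).ne'
    rw [Real.exp_sub, Real.exp_neg, Real.exp_log (hpos v)]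
    field_simp
  have hPt := hone t
  have hQu := hone u
  rw [Real.log_le_iff_le_exp (hpos _)]
  generalize Real.log (A * Real.exp t + B) = P at *
  generalize Real.log (A * Real.exp u + B) = Q at *
  have h1 := convexOn_exp.2 (Set.mem_univ (t - P)) (Set.mem_univ (u - Q)) ha hb hab
  have h2 := convexOn_exp.2 (Set.mem_univ (-P)) (Set.mem_univ (-Q)) ha hb hab
  simp only [smul_eq_mul] at h1 h2
  have e1 : a * (t - P) + b * (u - Q) = (a * t + b * u) - (a * P + b * Q) := by ring
  have e2 : a * -P + b * -Q = -(a * P + b * Q) := by ring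
  rw [e1, Real.exp_sub] at h1
  rw [e2, Real.exp_neg] at h2
  have h3 := add_le_add (mul_le_mul_of_nonneg_left h1 hA.le) (mul_le_mul_of_nonneg_left h2 hB.le)
  rw [← div_le_one (Real.exp_pos _)]
  calc (A * Real.exp (a * t + b * u) + B) / Real.exp (a * P + b * Q)
      = A * (Real.exp (a * t + b * u) / Real.exp (a * P + b * Q))
        + B * (Real.exp (a * P + b * Q))⁻¹ := by ring
    _ ≤ _ := h3
    _ = a * (A * Real.exp (t - P) + B * Real.exp (-P))
        + b * (A * Real.exp (u - Q) + B * Real.exp (-Q)) := by ring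
    _ = 1 := by rw [hPt, hQu, mul_one, mul_one, hab]

lemma log_data_term_concave {A B a b : ℝ} (hA : 0 < A) (hB : 0 < B) (ha : 0 ≤ a) (hb : 0 ≤ b)
    (hab : a + b = 1) (t u : ℝ) :
    a * Real.log (A * Real.exp t / (A * Real.exp t + B))
        + b * Real.log (A * Real.exp u / (A * Real.exp u + B)) ≤
      Real.log (A * Real.exp (a * t + b * u) / (A * Real.exp (a * t + b * u) + B)) := by
  have hlog (v : ℝ) : Real.log (A * Real.exp v / (A * Real.exp v + B))
      = Real.log A + v - Real.log (A * Real.exp v + B) := by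
    rw [Real.log_div (by positivity) (by positivity),
      Real.log_mul hA.ne' (Real.exp_pos v).ne', Real.log_exp]
  have h := log_mul_exp_add_le hA hB ha hb hab t u
  have hA1 : a * Real.log A + b * Real.log A = Real.log A := by rw [← add_mul, hab, one_mul]
  rw [hlog, hlog, hlog]
  linarith

lemma log_reference_term_concave {A B a b : ℝ} (hA : 0 < A) (hB : 0 < B) (ha : 0 ≤ a)
    (hb : 0 ≤ b) (hab : a + b = 1) (t u : ℝ) :
    a * Real.log (B / (A * Real.exp t + B)) + b * Real.log (B / (A * Real.exp u + B)) ≤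
      Real.log (B / (A * Real.exp (a * t + b * u) + B)) := by
  have hlog (v : ℝ) : Real.log (B / (A * Real.exp v + B))
      = Real.log B - Real.log (A * Real.exp v + B) :=
    Real.log_div hB.ne' (by positivity)
  have h := log_mul_exp_add_le hA hB ha hb hab t u
  have hB1 : a * Real.log B + b * Real.log B = Real.log B := by rw [← add_mul, hab, one_mul]
  rw [hlog, hlog, hlog]
  linarith

/-- **concavity of the noise-contrastive log-likelihood for
exponential families.**  For the exponential-family energy `f θ y = ⟨θ, s y⟩`,
fixed data `y₁,…,y_n`, reference points `r₁,…,r_m` and positive density `q`, the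
noise-contrastive log-likelihood `R^m` is a concave function of `(θ, ν)` on
`ℝᵖ × ℝ`. -/
theorem ncd_concave_exponential_family
    {Ω : Type*} [MeasurableSpace Ω] (μ : Measure Ω) {p : ℕ}
    (s : Ω → Fin p → ℝ) (hs : Measurable s)
    (q : Ω → ℝ) (hqm : Measurable q) (hqpos : ∀ z : Ω, 0 < q z)
    (hqdens : ∫ z, q z ∂μ = 1)
    (n : ℕ) (hn : 1 ≤ n) (y : Fin n → Ω)
    (m : ℕ) (hm : 1 ≤ m) (r : Fin m → Ω)
    (R : (Fin p → ℝ) × ℝ → ℝ)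
    (hR : ∀ x : (Fin p → ℝ) × ℝ, R x =
      (∑ i : Fin n, Real.log ((n : ℝ) * Real.exp ((∑ k, x.1 k * s (y i) k) + x.2) /
        ((n : ℝ) * Real.exp ((∑ k, x.1 k * s (y i) k) + x.2) + (m : ℝ) * q (y i)))) +
      ∑ j : Fin m, Real.log ((m : ℝ) * q (r j) /
        ((n : ℝ) * Real.exp ((∑ k, x.1 k * s (r j) k) + x.2) + (m : ℝ) * q (r j)))) :
    ConcaveOn ℝ Set.univ R := by
  have hn' : (0 : ℝ) < n := by exact_mod_cast hn
  have hm' : (0 : ℝ) < m := by exact_mod_cast hm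
  refine ⟨convex_univ, fun x _ x' _ a b ha hb hab => ?_⟩
  -- the exponent `⟨θ, s z⟩ + ν` is linear in `(θ, ν)`
  have hlin (z : Ω) : (∑ k, (a • x + b • x').1 k * s z k) + (a • x + b • x').2
      = a * ((∑ k, x.1 k * s z k) + x.2) + b * ((∑ k, x'.1 k * s z k) + x'.2) := by
    have h : ∑ k, (a * x.1 k + b * x'.1 k) * s z k
        = a * ∑ k, x.1 k * s z k + b * ∑ k, x'.1 k * s z k := by
      rw [mul_sum, mul_sum, ← sum_add_distrib]
      exact sum_congr rfl fun k _ => by ring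
    simp only [Prod.fst_add, Prod.snd_add, Prod.smul_fst, Prod.smul_snd, Pi.add_apply,
      Pi.smul_apply, smul_eq_mul, h]
    ring
  simp only [hR, hlin, smul_eq_mul, mul_add a (∑ i : Fin n, _), mul_add b (∑ i : Fin n, _)]
  rw [add_add_add_comm]
  simp only [mul_sum, ← sum_add_distrib]
  refine add_le_add (sum_le_sum fun i _ => ?_) (sum_le_sum fun j _ => ?_)
  · exact log_data_term_concave hn' (mul_pos hm' (hqpos _)) ha hb hab _ _
  · exact log_reference_term_concave hn' (mul_pos hm' (hqpos _)) ha hb hab _ _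
end
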